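/- Let (E,d_E) be a separable metric space and let μ ∈ 𝒫_1(E). Then for all m, n ∈ ℕ, 𝔼[W_1(μ_{mn}, μ)] ≥ (1/(11·√(m·ln(2mn)))) · 𝔼[W_1(μ_n, μ)], where μ_k denotes the empirical measure of μ with sample size k. -/

import Mathlib

open MeasureTheory ENNReal Filter

noncomputable section

/-- The `p`-Wasserstein distance between two measures on a metric space, as an
extended nonnegative real: the infimum over all couplings `γ` (measures on `E × E`
with the prescribed marginals) of `(∫ d(x,y)^p dγ)^(1/p)`. -/
def Wp {E : Type*} [MetricSpace E] [MeasurableSpace E] (p : ℝ) (μ ν : Measure E) : ℝ≥0∞ :=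
  ⨅ γ ∈ {γ : Measure (E × E) | γ.map Prod.fst = μ ∧ γ.map Prod.snd = ν},
    (∫⁻ z, edist z.1 z.2 ^ p ∂γ) ^ (1 / p)

/-- The (uniform) discrete measure `(1/n) ∑ δ_{X i}`. -/
def empiricalMeasure {E : Type*} [MeasurableSpace E] (n : ℕ) (X : Fin n → E) : Measure E :=
  (n : ℝ≥0∞)⁻¹ • ∑ i, Measure.dirac (X i)

/-- The law of `n` independent samples of `μ`. -/
def sampleMeasure {E : Type*} [MeasurableSpace E] (μ : Measure E) (n : ℕ) :
    Measure (Fin n → E) :=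
  Measure.pi fun _ => μ

/-- `𝔼[W_p(μ_n, μ)]`, where `μ_n` is the empirical measure of `μ` with sample size `n`. -/
def expWp {E : Type*} [MetricSpace E] [MeasurableSpace E] (p : ℝ) (μ : Measure E) (n : ℕ) :
    ℝ≥0∞ :=
  ∫⁻ X, Wp p (empiricalMeasure n X) μ ∂(sampleMeasure μ n)

/-- `(𝔼[W_p(μ_n, μ)^p])^{1/p}`, where `μ_n` is the empirical measure of `μ` with
sample size `n`. -/
def expWpPow {E : Type*} [MetricSpace E] [MeasurableSpace E] (p : ℝ) (μ : Measure E) (n : ℕ) :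
    ℝ≥0∞ :=
  (∫⁻ X, (Wp p (empiricalMeasure n X) μ) ^ p ∂(sampleMeasure μ n)) ^ (1 / p)

/-- The optimal uniform quantization error
`b_{n,p}(μ) = inf_{x₁,…,x_n} W_p(μ, (1/n) ∑ δ_{x_i})`. -/
def unifQuantErr {E : Type*} [MetricSpace E] [MeasurableSpace E] (p : ℝ) (n : ℕ)
    (μ : Measure E) : ℝ≥0∞ :=
  ⨅ x : Fin n → E, Wp p μ (empiricalMeasure n x)

/-- The optimal quantization error `e_{n,p}(μ)`: the infimum of `W_p(μ, ν)` over all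
probability measures `ν` supported on at most `n` points. -/
def quantErr {E : Type*} [MetricSpace E] [MeasurableSpace E] (p : ℝ) (n : ℕ)
    (μ : Measure E) : ℝ≥0∞ :=
  ⨅ ν ∈ {ν : Measure E | IsProbabilityMeasure ν ∧
      ∃ S : Finset E, S.card ≤ n ∧ ν (↑S : Set E)ᶜ = 0}, Wp p μ ν

/-- `μ` has a finite `p`-th moment: `∫ d(x, x₀)^p dμ(x) < ∞` for some `x₀`. -/
def HasFiniteMoment {E : Type*} [MetricSpace E] [MeasurableSpace E] (p : ℝ)
    (μ : Measure E) : Prop :=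
  ∃ x₀ : E, ∫⁻ x, edist x x₀ ^ p ∂μ ≠ ∞

end

theorem ds_cost {ι : Type*} [Fintype ι] [DecidableEq ι] (a : ι → ι → ℝ) (c : ℝ)
    (h : ∀ σ : Equiv.Perm ι, c ≤ ∑ i, a i (σ i)) (M : Matrix ι ι ℝ)
    (hM : M ∈ doublyStochastic ℝ ι) : c ≤ ∑ i, ∑ j, M i j * a i j := by
  obtain ⟨w, hw0, hw1, rfl⟩ := exists_eq_sum_perm_of_mem_doublyStochastic hM
  have key : ∀ σ : Equiv.Perm ι, ∑ i, ∑ j, (σ.permMatrix ℝ) i j * a i j = ∑ i, a i (σ i) := by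
    intro σ
    refine Finset.sum_congr rfl fun i _ => ?_
    simp [Equiv.Perm.permMatrix, PEquiv.toMatrix_apply, Equiv.toPEquiv_apply]
  calc c = ∑ σ, w σ * c := by rw [← Finset.sum_mul, hw1, one_mul]
    _ ≤ ∑ σ, w σ * ∑ i, a i (σ i) :=
        Finset.sum_le_sum fun σ _ => mul_le_mul_of_nonneg_left (h σ) (hw0 σ)
    _ = ∑ σ, ∑ i, ∑ j, w σ * ((σ.permMatrix ℝ) i j * a i j) := by
        refine Finset.sum_congr rfl fun σ _ => ?_
        rw [← key, Finset.mul_sum]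
        refine Finset.sum_congr rfl fun i _ => ?_
        rw [Finset.mul_sum]
    _ = _ := by
        rw [Finset.sum_comm]
        refine Finset.sum_congr rfl fun i _ => ?_
        rw [Finset.sum_comm]
        refine Finset.sum_congr rfl fun j _ => ?_
        simp only [Matrix.sum_apply, Matrix.smul_apply, smul_eq_mul, Finset.sum_mul, mul_assoc]

theorem closed_walk {ι : Type*} [Fintype ι] [DecidableEq ι] (a : ι → ι → ℝ)
    (h : ∀ σ : Equiv.Perm ι, ∑ i, a i i ≤ ∑ i, a i (σ i)) (p : ℕ → ι) (t : ℕ)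
    (hp : p 0 = p t) :
    0 ≤ ∑ r ∈ Finset.range t, (a (p (r+1)) (p r) - a (p (r+1)) (p (r+1))) := by
  rcases Nat.eq_zero_or_pos t with rfl | ht
  · simp
  have ht' : (0:ℝ) < t := by exact_mod_cast ht
  let B : ι → ι → ℝ := fun i j => ∑ r ∈ Finset.range t,
    ((if p (r+1) = i ∧ p r = j then (1:ℝ) else 0) - (if p (r+1) = i ∧ p (r+1) = j then 1 else 0))
  let M : Matrix ι ι ℝ := fun i j => (if i = j then 1 else 0) + (t:ℝ)⁻¹ * B i j
  have hM : M ∈ doublyStochastic ℝ ι := by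
    rw [mem_doublyStochastic_iff_sum]
    refine ⟨fun i j => ?_, fun i => ?_, fun j => ?_⟩
    · by_cases hij : i = j
      · have : -(t:ℝ) ≤ B i j := by
          have : ∑ r ∈ Finset.range t, (-1:ℝ) ≤ B i j := by
            refine Finset.sum_le_sum fun r _ => ?_
            split_ifs <;> norm_num
          simpa using this
        simp only [M, hij, if_true]
        rw [hij] at this
        have h2 := mul_le_mul_of_nonneg_left this (inv_nonneg.2 ht'.le)
        have : (t:ℝ)⁻¹ * -(t:ℝ) = -1 := by field_simp
        linarith
      · have : 0 ≤ B i j := by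
          refine Finset.sum_nonneg fun r _ => ?_
          have : ¬ (p (r+1) = i ∧ p (r+1) = j) := fun ⟨h1, h2⟩ => hij (h1.symm.trans h2)
          rw [if_neg this]
          split_ifs <;> norm_num
        simp only [M, hij, if_false]
        positivity
    · have : ∑ j, B i j = 0 := by
        simp only [B]
        rw [Finset.sum_comm]
        refine Finset.sum_eq_zero fun r _ => ?_
        simp [Finset.sum_sub_distrib, ite_and]
      simp [M, Finset.sum_add_distrib, ← Finset.mul_sum, this]
    · have : ∑ i, B i j = 0 := by
        simp only [B]
        rw [Finset.sum_comm]
        have : ∀ r, ∑ i, ((if p (r+1) = i ∧ p r = j then (1:ℝ) else 0) -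
          (if p (r+1) = i ∧ p (r+1) = j then 1 else 0)) =
            (if p r = j then 1 else 0) - (if p (r+1) = j then 1 else 0) := by
          intro r
          simp [Finset.sum_sub_distrib, ite_and]
        simp only [this]
        rw [Finset.sum_range_sub', hp]
        simp
      simp [M, Finset.sum_add_distrib, ← Finset.mul_sum, this]
  have h1 := ds_cost a _ h M hM
  have hB : ∑ i, ∑ j, B i j * a i j =
      ∑ r ∈ Finset.range t, (a (p (r+1)) (p r) - a (p (r+1)) (p (r+1))) := by
    simp only [B, Finset.sum_mul]
    have : ∀ i, ∑ j, ∑ r ∈ Finset.range t, ((if p (r+1) = i ∧ p r = j then (1:ℝ) else 0) -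
          (if p (r+1) = i ∧ p (r+1) = j then 1 else 0)) * a i j =
        ∑ r ∈ Finset.range t, ∑ j, ((if p (r+1) = i ∧ p r = j then (1:ℝ) else 0) -
          (if p (r+1) = i ∧ p (r+1) = j then 1 else 0)) * a i j := fun i => Finset.sum_comm
    simp only [this]
    rw [Finset.sum_comm]
    refine Finset.sum_congr rfl fun r _ => ?_
    simp [sub_mul, Finset.sum_sub_distrib, ite_and]
  have h2 : ∑ i, ∑ j, M i j * a i j = ∑ i, a i i + (t:ℝ)⁻¹ * ∑ i, ∑ j, B i j * a i j := by
    simp [M, add_mul, Finset.sum_add_distrib, Finset.mul_sum, mul_assoc]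
  rw [h2, hB] at h1
  have h3 : 0 ≤ (t:ℝ)⁻¹ * ∑ r ∈ Finset.range t, (a (p (r+1)) (p r) - a (p (r+1)) (p (r+1))) := by
    linarith
  exact nonneg_of_mul_nonneg_right h3 (inv_pos.2 ht')

theorem exists_potential {ι : Type*} [Fintype ι] [DecidableEq ι] (a : ι → ι → ℝ)
    (h : ∀ σ : Equiv.Perm ι, ∑ i, a i i ≤ ∑ i, a i (σ i)) :
    ∃ v : ι → ℝ, ∀ i k, v i + a i i ≤ v k + a i k := by
  rcases isEmpty_or_nonempty ι with he | ⟨⟨i0⟩⟩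
  · exact ⟨fun _ => 0, fun i => (he.false i).elim⟩
  let S : ι → Set ℝ := fun i => {x | ∃ (t : ℕ) (p : ℕ → ι), p 0 = i0 ∧ p t = i ∧
    x = ∑ r ∈ Finset.range t, (a (p (r+1)) (p r) - a (p (r+1)) (p (r+1)))}
  -- appending one step to a walk
  have app : ∀ i k x, x ∈ S k → x + (a i k - a i i) ∈ S i := by
    rintro i k x ⟨t, p, h0, ht, rfl⟩
    refine ⟨t + 1, fun r => if r ≤ t then p r else i, by simpa using h0, by simp, ?_⟩
    rw [Finset.sum_range_succ]
    congr 1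
    · refine Finset.sum_congr rfl fun r hr => ?_
      have hr' : r < t := Finset.mem_range.1 hr
      have h1 : r ≤ t := hr'.le
      have h2 : r + 1 ≤ t := hr'
      simp [h1, h2]
    · simp [ht]
  have hne : ∀ i, (S i).Nonempty := fun i =>
    ⟨_, app i i0 0 ⟨0, fun _ => i0, rfl, rfl, by simp⟩⟩
  have hbd : ∀ i, BddBelow (S i) := by
    intro i
    refine ⟨-(a i0 i - a i0 i0), fun x hx => ?_⟩
    obtain ⟨t, p, h0, ht, he⟩ := app i0 i x hx
    have := closed_walk a h p t (h0.trans ht.symm)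
    linarith
  refine ⟨fun i => sInf (S i), fun i k => ?_⟩
  have : sInf (S i) - (a i k - a i i) ≤ sInf (S k) := by
    refine le_csInf (hne k) fun x hx => ?_
    have := csInf_le (hbd i) (app i k x hx)
    linarith
  dsimp only
  linarith

/-- minimal matching cost -/
noncomputable def mcost {E : Type*} [MetricSpace E] {n : ℕ} (X Y : Fin n → E) : ℝ :=
  (Finset.univ : Finset (Equiv.Perm (Fin n))).inf' ⟨1, Finset.mem_univ _⟩
    (fun σ => ∑ i, dist (X i) (Y (σ i)))

theorem mcost_le {E : Type*} [MetricSpace E] {n : ℕ} (X Y : Fin n → E) (σ : Equiv.Perm (Fin n)) :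
    mcost X Y ≤ ∑ i, dist (X i) (Y (σ i)) :=
  Finset.inf'_le _ (Finset.mem_univ σ)

theorem exists_mcost {E : Type*} [MetricSpace E] {n : ℕ} (X Y : Fin n → E) :
    ∃ σ : Equiv.Perm (Fin n), mcost X Y = ∑ i, dist (X i) (Y (σ i)) := by
  obtain ⟨σ, -, h⟩ := Finset.exists_mem_eq_inf' (s := (Finset.univ : Finset (Equiv.Perm (Fin n))))
    ⟨1, Finset.mem_univ _⟩ (fun σ => ∑ i, dist (X i) (Y (σ i)))
  exact ⟨σ, h⟩

theorem mcost_nonneg {E : Type*} [MetricSpace E] {n : ℕ} (X Y : Fin n → E) : 0 ≤ mcost X Y := by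
  obtain ⟨σ, h⟩ := exists_mcost X Y
  rw [h]; positivity

theorem lip_le_mcost {E : Type*} [MetricSpace E] {n : ℕ} (X Y : Fin n → E) (f : E → ℝ)
    (hf : ∀ x y, f x - f y ≤ dist x y) : |∑ i, (f (X i) - f (Y i))| ≤ mcost X Y := by
  obtain ⟨σ, h⟩ := exists_mcost X Y
  have : ∑ i, (f (X i) - f (Y i)) = ∑ i, (f (X i) - f (Y (σ i))) := by
    rw [Finset.sum_sub_distrib, Finset.sum_sub_distrib, Equiv.sum_comp σ (fun i => f (Y i))]
  rw [this, h]
  refine (Finset.abs_sum_le_sum_abs _ _).trans (Finset.sum_le_sum fun i _ => ?_)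
  rw [abs_le]
  have h1 := hf (X i) (Y (σ i))
  have h2 := hf (Y (σ i)) (X i)
  rw [dist_comm] at h2
  constructor <;> linarith

theorem exists_dual {E : Type*} [MetricSpace E] {n : ℕ} (X Y : Fin n → E) :
    ∃ f : E → ℝ, (∀ x y, f x - f y ≤ dist x y) ∧ mcost X Y ≤ ∑ i, (f (X i) - f (Y i)) := by
  rcases Nat.eq_zero_or_pos n with rfl | hn
  · refine ⟨fun _ => 0, fun x y => by simp, ?_⟩
    simpa using mcost_le X Y 1
  obtain ⟨σ, h⟩ := exists_mcost X Y
  obtain ⟨v, hv⟩ := exists_potential (fun i j => dist (X i) (Y (σ j))) (by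
    intro τ
    have := mcost_le X Y (τ.trans σ)
    rw [h] at this
    simpa using this)
  have hne : (Finset.univ : Finset (Fin n)).Nonempty := ⟨⟨0, hn⟩, Finset.mem_univ _⟩
  let f : E → ℝ := fun z => Finset.univ.inf' hne (fun k => v k + dist z (Y (σ k)))
  refine ⟨f, fun x y => ?_, ?_⟩
  · obtain ⟨k, -, hk⟩ := Finset.exists_mem_eq_inf' hne (fun k => v k + dist y (Y (σ k)))
    have h1 : f x ≤ v k + dist x (Y (σ k)) := Finset.inf'_le _ (Finset.mem_univ k)
    have h2 : f y = v k + dist y (Y (σ k)) := hk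
    have := dist_triangle x y (Y (σ k))
    linarith
  · have : ∑ i, (f (X i) - f (Y i)) = ∑ i, (f (X i) - f (Y (σ i))) := by
      rw [Finset.sum_sub_distrib, Finset.sum_sub_distrib, Equiv.sum_comp σ (fun i => f (Y i))]
    rw [this, h]
    refine Finset.sum_le_sum fun i _ => ?_
    have h1 : f (Y (σ i)) ≤ v i + dist (Y (σ i)) (Y (σ i)) :=
      Finset.inf'_le _ (Finset.mem_univ i)
    have h2 : v i + dist (X i) (Y (σ i)) ≤ f (X i) :=
      Finset.le_inf' _ _ fun k _ => hv i k
    rw [dist_self] at h1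
    linarith

/-- sign of a boolean -/
noncomputable def sgn (b : Bool) : ℝ := if b then 1 else -1

theorem abs_sgn (b : Bool) : |sgn b| = 1 := by cases b <;> simp [sgn]

theorem sgn_not (b : Bool) : sgn (!b) = - sgn b := by cases b <;> simp [sgn]

theorem sgn_mul_self (b : Bool) : sgn b * sgn b = 1 := by cases b <;> simp [sgn]

theorem sign_mgf (m : ℕ) (lam : ℝ) (t : Fin m → ℝ) :
    ∑ s : Fin m → Bool, Real.exp (lam * ∑ l, sgn (s l) * t l) ≤
      2 ^ m * Real.exp (lam ^ 2 * (∑ l, t l ^ 2) / 2) := by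
  have h1 : ∑ s : Fin m → Bool, Real.exp (lam * ∑ l, sgn (s l) * t l) =
      ∏ l : Fin m, ∑ b : Bool, Real.exp (lam * (sgn b * t l)) := by
    rw [Finset.prod_univ_sum, Fintype.piFinset_univ]
    refine Finset.sum_congr rfl fun s _ => ?_
    rw [← Real.exp_sum, Finset.mul_sum]
  rw [h1]
  have h2 : ∀ l, ∑ b : Bool, Real.exp (lam * (sgn b * t l)) ≤
      2 * Real.exp (lam ^ 2 * t l ^ 2 / 2) := by
    intro l
    have := Real.cosh_le_exp_half_sq (lam * t l)
    rw [Real.cosh_eq, mul_pow] at this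
    simp only [Fintype.sum_bool, sgn]
    norm_num
    linarith
  calc _ ≤ ∏ l : Fin m, (2 * Real.exp (lam ^ 2 * t l ^ 2 / 2)) :=
        Finset.prod_le_prod (fun l _ => Finset.sum_nonneg fun b _ => (Real.exp_pos _).le)
          fun l _ => h2 l
    _ = _ := by
        rw [Finset.prod_mul_distrib, ← Real.exp_sum]
        simp [Finset.mul_sum, Finset.sum_div]

open Classical in
theorem sign_tail (m : ℕ) (hm : 1 ≤ m) (L d : ℝ) (hL : 0 < L) (t : Fin m → ℝ)
    (ht : ∀ l, |t l| ≤ d) :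
    ((Finset.univ.filter fun s : Fin m → Bool => L * d < ∑ l, sgn (s l) * t l).card : ℝ) ≤
      2 ^ m * Real.exp (-(L ^ 2 / (2 * m))) := by
  have hm' : (0:ℝ) < m := by exact_mod_cast hm
  have hd : 0 ≤ d := (abs_nonneg _).trans (ht ⟨0, hm⟩)
  rcases hd.eq_or_lt with h0 | hd
  · have : ∀ l, t l = 0 := fun l => abs_nonpos_iff.1 (h0 ▸ ht l)
    simp [this, ← h0]
    positivity
  set lam := L / (m * d) with hlam
  have hlam0 : 0 < lam := by positivity
  set A := Finset.univ.filter fun s : Fin m → Bool => L * d < ∑ l, sgn (s l) * t l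
  have h1 : (A.card : ℝ) * Real.exp (lam * (L * d)) ≤
      2 ^ m * Real.exp (lam ^ 2 * (∑ l, t l ^ 2) / 2) := by
    refine le_trans ?_ (sign_mgf m lam t)
    rw [← nsmul_eq_mul]
    refine (Finset.card_nsmul_le_sum A _ _ fun s hs => ?_).trans
      (Finset.sum_le_sum_of_subset_of_nonneg (Finset.subset_univ A)
        fun s _ _ => (Real.exp_pos _).le)
    have := (Finset.mem_filter.1 hs).2
    exact Real.exp_le_exp.2 (mul_le_mul_of_nonneg_left this.le hlam0.le)
  have h2 : ∑ l, t l ^ 2 ≤ m * d ^ 2 := by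
    have : ∑ l, t l ^ 2 ≤ ∑ l : Fin m, d ^ 2 :=
      Finset.sum_le_sum fun l _ => by rw [← sq_abs]; exact pow_le_pow_left₀ (abs_nonneg _) (ht l) 2
    simpa using this
  have h3 : (A.card : ℝ) ≤ 2 ^ m * Real.exp (lam ^ 2 * (∑ l, t l ^ 2) / 2 - lam * (L * d)) := by
    rw [Real.exp_sub, ← mul_div_assoc, le_div_iff₀ (Real.exp_pos _)]
    exact h1
  refine h3.trans (mul_le_mul_of_nonneg_left (Real.exp_le_exp.2 ?_) (by positivity))
  have h4 : lam ^ 2 * (∑ l, t l ^ 2) ≤ lam ^ 2 * (m * d ^ 2) :=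
    mul_le_mul_of_nonneg_left h2 (by positivity)
  have h5 : lam ^ 2 * (m * d ^ 2) = L ^ 2 / m := by rw [hlam]; field_simp
  have h6 : lam * (L * d) = L ^ 2 / m := by rw [hlam]; field_simp
  have h7 : L ^ 2 / (2 * m) = L ^ 2 / m / 2 := by field_simp
  rw [h6, h7]
  linarith

theorem sum_sgn_sgn (m : ℕ) (b l : Fin m) :
    ∑ s : Fin m → Bool, sgn (s b) * sgn (s l) = if b = l then 2 ^ m else 0 := by
  split_ifs with h
  · subst h
    simp [sgn_mul_self]
  · have : ∑ s : Fin m → Bool, sgn (s b) * sgn (s l) =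
        ∑ s : Fin m → Bool, -(sgn (s b) * sgn (s l)) := by
      refine Finset.sum_nbij' (fun s => Function.update s b (!(s b)))
        (fun s => Function.update s b (!(s b))) (by simp) (by simp) ?_ ?_ ?_
      · intro s _; simp
      · intro s _; simp
      · intro s _
        have : l ≠ b := fun e => h e.symm
        simp [this, sgn_not]
    rw [Finset.sum_neg_distrib] at this
    linarith

open Classical in
theorem sign_key {E : Type*} [MetricSpace E] (m n : ℕ) (hm : 1 ≤ m) (hn : 1 ≤ n)
    (X Y : Fin m → Fin n → E) (L : ℝ) (hL : L = Real.sqrt (8 * (m * Real.log (2 * m * n)))) :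
    ∃ T : (Fin m → Bool) → ℝ, (∀ s, ∃ F : E → ℝ, (∀ x y, F x - F y ≤ L * dist x y) ∧
      T s ≤ ∑ b, ∑ j, sgn (s b) * (F (X b j) - F (Y b j))) ∧
      3 / 4 * 2 ^ m * ∑ b, mcost (X b) (Y b) ≤ ∑ s, T s := by
  have hm' : (1:ℝ) ≤ m := by exact_mod_cast hm
  have hn' : (1:ℝ) ≤ n := by exact_mod_cast hn
  have hN : (2:ℝ) ≤ 2 * m * n := by nlinarith
  have hlog : 0 < Real.log (2 * m * n) := Real.log_pos (by linarith)
  have hLpos : 0 < L := by rw [hL]; positivity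
  have hL2 : L ^ 2 = 8 * (m * Real.log (2 * m * n)) := by
    rw [hL, Real.sq_sqrt (by positivity)]
  choose f hf hfc using fun b => exists_dual (X b) (Y b)
  let C : ℝ := ∑ b, mcost (X b) (Y b)
  have hC : 0 ≤ C := Finset.sum_nonneg fun b _ => mcost_nonneg _ _
  let P := Bool × Fin m × Fin n
  let pt : P → E := fun q => if q.1 then X q.2.1 q.2.2 else Y q.2.1 q.2.2
  let G : (Fin m → Bool) → E → ℝ := fun s x => ∑ l, sgn (s l) * f l x
  let bad : Finset (Fin m → Bool) := Finset.univ.filter fun s =>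
    ∃ q : P × P, L * dist (pt q.1) (pt q.2) < G s (pt q.1) - G s (pt q.2)
  let U : (Fin m → Bool) → ℝ := fun s => ∑ b, ∑ j, sgn (s b) * (G s (X b j) - G s (Y b j))
  -- count of bad sign vectors
  have hbad : (bad.card : ℝ) * (4 * m) ≤ 2 ^ m := by
    have h1 : bad ⊆ (Finset.univ : Finset (P × P)).biUnion fun q =>
        Finset.univ.filter fun s : Fin m → Bool =>
          L * dist (pt q.1) (pt q.2) < ∑ l, sgn (s l) * (f l (pt q.1) - f l (pt q.2)) := by
      intro s hs
      obtain ⟨q, hq⟩ := (Finset.mem_filter.1 hs).2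
      simp only [Finset.mem_biUnion, Finset.mem_univ, true_and, Finset.mem_filter]
      refine ⟨q, ?_⟩
      simpa only [G, mul_sub, Finset.sum_sub_distrib] using hq
    have h2 : (bad.card : ℝ) ≤ ∑ q : P × P, 2 ^ m * Real.exp (-(L ^ 2 / (2 * m))) := by
      have h3 := (Finset.card_le_card h1).trans Finset.card_biUnion_le
      refine (Nat.cast_le (α := ℝ).2 h3).trans ?_
      rw [Nat.cast_sum]
      refine Finset.sum_le_sum fun q _ => sign_tail m hm L _ hLpos _ fun l => ?_
      have h1 := hf l (pt q.1) (pt q.2)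
      have h2 := hf l (pt q.2) (pt q.1)
      rw [dist_comm] at h2
      rw [abs_le]; constructor <;> linarith
    have h3 : Real.exp (-(L ^ 2 / (2 * m))) = ((2 * m * n : ℝ) ^ 4)⁻¹ := by
      rw [Real.exp_neg, hL2]
      congr 1
      have : 8 * (m * Real.log (2 * m * n)) / (2 * m) = (4:ℕ) * Real.log (2 * m * n) := by
        rw [div_eq_iff (by positivity)]; push_cast; ring
      rw [this, Real.exp_nat_mul, Real.exp_log (by linarith)]
    have h4 : (Fintype.card (P × P) : ℝ) = (2 * m * n) ^ 2 := by
      simp [P]; ring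
    rw [Finset.sum_const, Finset.card_univ, nsmul_eq_mul, h3, h4] at h2
    have h5 : (2 * m * n : ℝ) ^ 2 * (2 ^ m * ((2 * m * n : ℝ) ^ 4)⁻¹) =
        2 ^ m / (2 * m * n) ^ 2 := by
      field_simp
    rw [h5, le_div_iff₀ (by positivity)] at h2
    refine le_trans (mul_le_mul_of_nonneg_left ?_ (Nat.cast_nonneg _)) h2
    have : (m:ℝ) ≤ (m * n)^2 := by
      have : (m:ℝ) ≤ m * n := by nlinarith
      nlinarith
    nlinarith
  have hU : ∀ s, |U s| ≤ m * C := by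
    intro s
    have h1 : U s = ∑ b, ∑ l, sgn (s b) * sgn (s l) * ∑ j, (f l (X b j) - f l (Y b j)) := by
      refine Finset.sum_congr rfl fun b _ => ?_
      simp only [Finset.mul_sum]
      rw [Finset.sum_comm]
      refine Finset.sum_congr rfl fun j _ => ?_
      simp only [G]
      rw [← Finset.sum_sub_distrib, Finset.mul_sum]
      refine Finset.sum_congr rfl fun l _ => ?_
      ring
    rw [h1]
    refine (Finset.abs_sum_le_sum_abs _ _).trans ?_
    rw [Finset.mul_sum]
    refine Finset.sum_le_sum fun b _ => (Finset.abs_sum_le_sum_abs _ _).trans ?_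
    have : ∑ l : Fin m, |sgn (s b) * sgn (s l) * ∑ j, (f l (X b j) - f l (Y b j))| ≤
        ∑ l : Fin m, mcost (X b) (Y b) := by
      refine Finset.sum_le_sum fun l _ => ?_
      rw [abs_mul, abs_mul, abs_sgn, abs_sgn, one_mul, one_mul]
      exact lip_le_mcost _ _ _ (hf l)
    simpa using this
  have hUsum : 2 ^ m * C ≤ ∑ s, U s := by
    have h1 : ∑ s, U s = ∑ b, ∑ j, ∑ l, (∑ s : Fin m → Bool, sgn (s b) * sgn (s l)) *
        (f l (X b j) - f l (Y b j)) := by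
      rw [Finset.sum_comm]
      refine Finset.sum_congr rfl fun b _ => ?_
      rw [Finset.sum_comm]
      refine Finset.sum_congr rfl fun j _ => ?_
      simp only [Finset.sum_mul]
      rw [Finset.sum_comm]
      refine Finset.sum_congr rfl fun s _ => ?_
      simp only [G]
      rw [← Finset.sum_sub_distrib, Finset.mul_sum]
      refine Finset.sum_congr rfl fun l _ => ?_
      ring
    rw [h1]
    simp only [sum_sgn_sgn, ite_mul, zero_mul, Finset.sum_ite_eq, Finset.mem_univ, if_true, C]
    rw [Finset.mul_sum]
    refine Finset.sum_le_sum fun b _ => ?_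
    rw [← Finset.mul_sum]
    exact mul_le_mul_of_nonneg_left (hfc b) (by positivity)
  refine ⟨fun s => if s ∈ bad then 0 else U s, fun s => ?_, ?_⟩
  · by_cases hs : s ∈ bad
    · exact ⟨fun _ => 0, fun x y => by simp; positivity, by simp [hs]⟩
    · have hgood : ∀ q q' : P, G s (pt q) - G s (pt q') ≤ L * dist (pt q) (pt q') := by
        intro q q'
        by_contra hc
        exact hs (Finset.mem_filter.2 ⟨Finset.mem_univ _, ⟨(q, q'), not_le.1 hc⟩⟩)
      have hlip : LipschitzOnWith (Real.toNNReal L) (G s) (Set.range pt) := by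
        refine LipschitzOnWith.of_le_add_mul _ ?_
        rintro _ ⟨q, rfl⟩ _ ⟨q', rfl⟩
        rw [Real.coe_toNNReal _ hLpos.le]
        have := hgood q q'
        linarith
      obtain ⟨F, hF, hFe⟩ := hlip.extend_real
      refine ⟨F, fun x y => ?_, ?_⟩
      · have := hF.le_add_mul x y
        rw [Real.coe_toNNReal _ hLpos.le] at this
        linarith
      · simp only [hs, if_false, U]
        refine le_of_eq (Finset.sum_congr rfl fun b _ => Finset.sum_congr rfl fun j _ => ?_)
        have h1 : G s (X b j) = F (X b j) := hFe ⟨(true, b, j), by simp [pt]⟩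
        have h2 : G s (Y b j) = F (Y b j) := hFe ⟨(false, b, j), by simp [pt]⟩
        rw [h1, h2]
  · have h1 : ∑ s, (U s - (if s ∈ bad then m * C else 0)) ≤ ∑ s, (if s ∈ bad then 0 else U s) := by
      refine Finset.sum_le_sum fun s _ => ?_
      have := (abs_le.1 (hU s)).2
      split_ifs <;> linarith
    rw [Finset.sum_sub_distrib, Finset.sum_ite_mem, Finset.univ_inter, Finset.sum_const,
      nsmul_eq_mul] at h1
    have h2 : (bad.card : ℝ) * (m * C) * 4 ≤ 2 ^ m * C := by
      have := mul_le_mul_of_nonneg_right hbad hC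
      linarith
    change 3 / 4 * 2 ^ m * C ≤ _
    linarith

section MeasurePart

variable {E : Type*} [MetricSpace E] [TopologicalSpace.SeparableSpace E]
    [MeasurableSpace E] [BorelSpace E]

theorem lip_integrable (μ : Measure E) [IsProbabilityMeasure μ] (hμ : HasFiniteMoment 1 μ)
    (F : E → ℝ) (hF : LipschitzWith 1 F) : Integrable F μ := by
  have : SecondCountableTopology E := UniformSpace.secondCountable_of_separable E
  obtain ⟨x₀, hx⟩ := hμ
  have h1 : Integrable (fun x => dist x x₀) μ := by
    refine ⟨(by fun_prop : Continuous fun x => dist x x₀).aestronglyMeasurable, ?_⟩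
    rw [HasFiniteIntegral]
    simp only [ENNReal.rpow_one] at hx
    have : ∀ x, ‖dist x x₀‖ₑ = edist x x₀ := fun x => by
      rw [Real.enorm_eq_ofReal dist_nonneg, edist_dist]
    simp only [this]
    exact hx.lt_top
  refine ((integrable_const |F x₀|).add h1).mono' hF.continuous.aestronglyMeasurable
    (Eventually.of_forall fun x => ?_)
  have := hF.dist_le_mul x x₀
  rw [Real.dist_eq, NNReal.coe_one, one_mul] at this
  have h2 := abs_sub_abs_le_abs_sub (F x) (F x₀)
  simp only [Real.norm_eq_abs, Pi.add_apply]
  linarith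

/-- measurable dual lower bound of the Wasserstein distance -/
noncomputable def dualW (μ : Measure E) (N : ℕ) (Z : Fin N → E) : ℝ≥0∞ :=
  ⨆ F : {F : E → ℝ // LipschitzWith 1 F},
    ENNReal.ofReal ((N : ℝ)⁻¹ * ∑ k, F.1 (Z k) - ∫ x, F.1 x ∂μ)

theorem measurable_dualW (μ : Measure E) (N : ℕ) : Measurable (dualW μ N) := by
  have : SecondCountableTopology E := UniformSpace.secondCountable_of_separable E
  refine LowerSemicontinuous.measurable (lowerSemicontinuous_iSup fun F => ?_)
  refine Continuous.lowerSemicontinuous (ENNReal.continuous_ofReal.comp ?_)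
  have := F.2.continuous
  fun_prop

theorem integral_empirical (N : ℕ) (Z : Fin N → E) (F : E → ℝ)
    (hF : LipschitzWith 1 F) :
    Integrable F (empiricalMeasure N Z) ∧
    ∫ x, F x ∂(empiricalMeasure N Z) = (N : ℝ)⁻¹ * ∑ k, F (Z k) := by
  have : SecondCountableTopology E := UniformSpace.secondCountable_of_separable E
  have hi : ∀ k ∈ (Finset.univ : Finset (Fin N)), Integrable F (Measure.dirac (Z k)) := fun k _ =>
    integrable_dirac (by simp)
  have hi' : Integrable F (∑ k, Measure.dirac (Z k)) := integrable_finsetSum_measure.2 hi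
  unfold empiricalMeasure
  constructor
  · rcases Nat.eq_zero_or_pos N with rfl | hN
    · simp
    · exact hi'.smul_measure (by simp; omega)
  · rw [integral_smul_measure, integral_finsetSum_measure hi]
    simp

theorem dualW_le (μ : Measure E) [IsProbabilityMeasure μ] (hμ : HasFiniteMoment 1 μ)
    (N : ℕ) (Z : Fin N → E) : dualW μ N Z ≤ Wp 1 (empiricalMeasure N Z) μ := by
  refine iSup_le fun ⟨F, hF⟩ => ?_
  refine le_iInf₂ fun γ hγ => ?_
  obtain ⟨h1, h2⟩ := hγ
  obtain ⟨hi, he⟩ := integral_empirical N Z F hF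
  have hi2 := lip_integrable μ hμ F hF
  dsimp only
  rw [← he]
  have e1 : ∫ x, F x ∂(empiricalMeasure N Z) = ∫ z, F z.1 ∂γ := by
    rw [← h1] at hi ⊢
    exact integral_map measurable_fst.aemeasurable hi.aestronglyMeasurable
  have e2 : ∫ x, F x ∂μ = ∫ z, F z.2 ∂γ := by
    rw [← h2] at hi2 ⊢
    exact integral_map measurable_snd.aemeasurable hi2.aestronglyMeasurable
  have i1 : Integrable (fun z : E × E => F z.1) γ := by
    rw [← h1] at hi
    exact hi.comp_measurable measurable_fst
  have i2 : Integrable (fun z : E × E => F z.2) γ := by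
    rw [← h2] at hi2
    exact hi2.comp_measurable measurable_snd
  rw [e1, e2, ← integral_sub i1 i2]
  simp only [ENNReal.rpow_one, div_one]
  calc ENNReal.ofReal (∫ z, (F z.1 - F z.2) ∂γ) ≤ ‖∫ z, (F z.1 - F z.2) ∂γ‖ₑ := by
        rw [Real.enorm_eq_ofReal_abs]
        exact ENNReal.ofReal_le_ofReal (le_abs_self _)
    _ ≤ ∫⁻ z, ‖F z.1 - F z.2‖ₑ ∂γ := enorm_integral_le_lintegral_enorm _
    _ ≤ _ := by
        refine lintegral_mono fun z => ?_
        have := hF z.1 z.2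
        rwa [ENNReal.coe_one, one_mul, edist_eq_enorm_sub] at this

theorem pair_le_dualW (μ : Measure E) (N : ℕ) (Z Z' : Fin N → E) (L : ℝ) (hL : 0 < L)
    (F : E → ℝ) (hF : ∀ x y, F x - F y ≤ L * dist x y) :
    ENNReal.ofReal ((N : ℝ)⁻¹ * ∑ k, (F (Z k) - F (Z' k))) ≤
      ENNReal.ofReal L * (dualW μ N Z + dualW μ N Z') := by
  have hF1 : LipschitzWith 1 (fun x => L⁻¹ * F x) := by
    refine LipschitzWith.of_le_add fun x y => ?_
    have := mul_le_mul_of_nonneg_left (hF x y) (inv_pos.2 hL).le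
    rw [← mul_assoc, inv_mul_cancel₀ hL.ne', one_mul] at this
    linarith
  have hF2 : LipschitzWith 1 (fun x => -(L⁻¹ * F x)) := hF1.neg
  have h1 := le_iSup (fun G : {F : E → ℝ // LipschitzWith 1 F} =>
    ENNReal.ofReal ((N : ℝ)⁻¹ * ∑ k, G.1 (Z k) - ∫ x, G.1 x ∂μ)) ⟨_, hF1⟩
  have h2 := le_iSup (fun G : {F : E → ℝ // LipschitzWith 1 F} =>
    ENNReal.ofReal ((N : ℝ)⁻¹ * ∑ k, G.1 (Z' k) - ∫ x, G.1 x ∂μ)) ⟨_, hF2⟩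
  refine le_trans ?_ (mul_le_mul_right (add_le_add h1 h2) _)
  refine le_trans ?_ (mul_le_mul_right ENNReal.ofReal_add_le _)
  rw [← ENNReal.ofReal_mul hL.le]
  refine ENNReal.ofReal_le_ofReal (le_of_eq ?_)
  simp only [integral_neg, Finset.sum_neg_distrib, ← Finset.mul_sum, Finset.sum_sub_distrib]
  field_simp
  ring

theorem measurable_mcost_right {n : ℕ} (X : Fin n → E) : Measurable (mcost X) := by
  have : SecondCountableTopology E := UniformSpace.secondCountable_of_separable E
  refine Continuous.measurable ?_
  unfold mcost
  refine Continuous.finset_inf'_apply _ fun σ _ => ?_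
  fun_prop

theorem measurable_mcost {n : ℕ} :
    Measurable (fun z : (Fin n → E) × (Fin n → E) => mcost z.1 z.2) := by
  have : SecondCountableTopology E := UniformSpace.secondCountable_of_separable E
  refine Continuous.measurable ?_
  unfold mcost
  refine Continuous.finset_inf'_apply _ fun σ _ => ?_
  fun_prop

/-- measurable selection of an optimal permutation -/
theorem exists_sel {n : ℕ} (X : Fin n → E) :
    ∃ σ : (Fin n → E) → Equiv.Perm (Fin n),
      (∀ j, Measurable fun Y : Fin n → E => Y (σ Y j)) ∧
      ∀ Y, mcost X Y = ∑ i, dist (X i) (Y (σ Y i)) := by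
  classical
  have : SecondCountableTopology E := UniformSpace.secondCountable_of_separable E
  obtain ⟨e, he⟩ := exists_surjective_nat (Equiv.Perm (Fin n))
  let p : (Fin n → E) → ℕ → Prop := fun Y k => mcost X Y = ∑ i, dist (X i) (Y (e k i))
  have hp : ∀ Y, ∃ k, p Y k := by
    intro Y
    obtain ⟨σ, hσ⟩ := exists_mcost X Y
    obtain ⟨k, rfl⟩ := he σ
    exact ⟨k, hσ⟩
  have hm : ∀ k, MeasurableSet {Y | p Y k} := by
    intro k
    refine measurableSet_eq_fun (measurable_mcost_right X) ?_
    exact Continuous.measurable (by fun_prop)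
  have hfind := measurable_find hp hm
  refine ⟨fun Y => e (Nat.find (hp Y)), fun j => ?_, fun Y => Nat.find_spec (hp Y)⟩
  have h2 : Measurable fun q : ℕ × (Fin n → E) => q.2 (e q.1 j) := by
    refine measurable_from_prod_countable_right fun k => ?_
    exact measurable_pi_apply (X := fun _ : Fin n => E) (e k j)
  exact h2.comp (hfind.prodMk measurable_id)

theorem Wp_le_mcost (μ : Measure E) [IsProbabilityMeasure μ] (n : ℕ) (hn : 1 ≤ n)
    (X : Fin n → E) :
    Wp 1 (empiricalMeasure n X) μ ≤
      ∫⁻ Y, ENNReal.ofReal ((n : ℝ)⁻¹ * mcost X Y) ∂(sampleMeasure μ n) := by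
  have : SecondCountableTopology E := UniformSpace.secondCountable_of_separable E
  have hn0 : (n : ℝ≥0∞) ≠ 0 := by simp; omega
  obtain ⟨σ, hσm, hσ⟩ := exists_sel X
  have : IsProbabilityMeasure (sampleMeasure μ n) := by unfold sampleMeasure; infer_instance
  set ν := sampleMeasure μ n with hν
  have hmeas : ∀ j, Measurable fun Y : Fin n → E => (X j, Y (σ Y j)) := fun j =>
    measurable_const.prodMk (hσm j)
  let γ : Measure (E × E) := (n : ℝ≥0∞)⁻¹ • ∑ j, ν.map fun Y => (X j, Y (σ Y j))
  have hγ1 : γ.map Prod.fst = empiricalMeasure n X := by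
    simp only [γ, Measure.map_smul, empiricalMeasure]
    congr 1
    rw [← Measure.mapₗ_apply_of_measurable measurable_fst, map_sum]
    refine Finset.sum_congr rfl fun j _ => ?_
    rw [Measure.mapₗ_apply_of_measurable measurable_fst, Measure.map_map measurable_fst (hmeas j)]
    have : (Prod.fst ∘ fun Y : Fin n → E => (X j, Y (σ Y j))) = fun _ => X j := rfl
    rw [this, Measure.map_const]
    simp
  have hγ2 : γ.map Prod.snd = μ := by
    ext A hA
    have h1 : ∀ j, (ν.map fun Y => (X j, Y (σ Y j))) (Prod.snd ⁻¹' A) =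
        ∫⁻ Y, A.indicator 1 (Y (σ Y j)) ∂ν := by
      intro j
      rw [Measure.map_apply (hmeas j) (measurable_snd hA)]
      rw [← lintegral_indicator_one ((hmeas j) (measurable_snd hA))]
      rfl
    have h2 : ∀ j, ∫⁻ Y : Fin n → E, A.indicator 1 (Y j) ∂ν = μ A := by
      intro j
      have := (measurePreserving_eval (fun _ : Fin n => μ) j).lintegral_comp
        (f := A.indicator 1) (measurable_one.indicator hA)
      rw [lintegral_indicator_one hA] at this
      exact this
    rw [Measure.map_apply measurable_snd hA]
    simp only [γ, Measure.smul_apply, Measure.finsetSum_apply, smul_eq_mul, h1]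
    rw [← lintegral_finsetSum]
    · have : ∀ Y : Fin n → E, ∑ j, A.indicator (1 : E → ℝ≥0∞) (Y (σ Y j)) =
          ∑ j, A.indicator 1 (Y j) := fun Y =>
        Equiv.sum_comp (σ Y) (fun j => A.indicator (1 : E → ℝ≥0∞) (Y j))
      simp only [this]
      rw [lintegral_finsetSum]
      · simp only [h2]
        rw [Finset.sum_const, Finset.card_univ, Fintype.card_fin, nsmul_eq_mul, ← mul_assoc,
          ENNReal.inv_mul_cancel hn0 (by simp), one_mul]
      · intro j _
        exact (measurable_one.indicator hA).comp (measurable_pi_apply j)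
    · intro j _
      exact (measurable_one.indicator hA).comp (hσm j)
  refine (iInf₂_le γ ⟨hγ1, hγ2⟩).trans (le_of_eq ?_)
  simp only [ENNReal.rpow_one, div_one, γ]
  have hed : Measurable fun z : E × E => edist z.1 z.2 := measurable_edist
  rw [lintegral_smul_measure, lintegral_finsetSum_measure]
  simp only [lintegral_map hed (hmeas _)]
  have hed' : ∀ j, Measurable fun Y : Fin n → E => edist (X j) (Y (σ Y j)) :=
    fun j => hed.comp (hmeas j)
  rw [← lintegral_finsetSum _ fun j _ => hed' j, smul_eq_mul, ← lintegral_const_mul]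
  · refine lintegral_congr fun Y => ?_
    rw [hσ Y, ENNReal.ofReal_mul (by positivity), ENNReal.ofReal_inv_of_pos (by exact_mod_cast hn),
      ENNReal.ofReal_natCast, ENNReal.ofReal_sum_of_nonneg fun i _ => dist_nonneg]
    simp only [edist_dist]
  · exact Finset.measurable_fun_sum _ fun j _ => hed' j

/-- flatten a block sample -/
def flat {E : Type*} {m n : ℕ} (Z : Fin m → Fin n → E) : Fin (m * n) → E :=
  fun k => Z (finProdFinEquiv.symm k).1 (finProdFinEquiv.symm k).2

theorem flat_preserving (μ : Measure E) [IsProbabilityMeasure μ] (m n : ℕ) :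
    MeasurePreserving (flat : (Fin m → Fin n → E) → _)
      (Measure.pi fun _ => sampleMeasure μ n) (sampleMeasure μ (m * n)) := by
  have hmeas : Measurable (flat : (Fin m → Fin n → E) → _) := by
    refine measurable_pi_lambda _ fun k => ?_
    exact (measurable_pi_apply _).comp (measurable_pi_apply _)
  have : IsProbabilityMeasure (sampleMeasure μ n) := by unfold sampleMeasure; infer_instance
  refine ⟨hmeas, ?_⟩
  symm
  refine Measure.pi_eq fun s hs => ?_
  rw [Measure.map_apply hmeas (MeasurableSet.univ_pi hs)]
  have : (flat : (Fin m → Fin n → E) → _) ⁻¹' (Set.univ.pi s) =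
      Set.univ.pi fun b => Set.univ.pi fun j => s (finProdFinEquiv (b, j)) := by
    ext Z
    simp only [Set.mem_preimage, Set.mem_univ_pi, flat]
    constructor
    · intro h b j
      simpa using h (finProdFinEquiv (b, j))
    · intro h k
      have := h (finProdFinEquiv.symm k).1 (finProdFinEquiv.symm k).2
      rwa [Prod.mk.eta, Equiv.apply_symm_apply] at this
  rw [this, Measure.pi_pi]
  simp only [sampleMeasure, Measure.pi_pi]
  rw [← Fintype.prod_prod_type', ← Equiv.prod_comp finProdFinEquiv]

theorem sum_flat {m n : ℕ} (Z : Fin m → Fin n → E) (F : E → ℝ) :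
    ∑ k, F (flat Z k) = ∑ b, ∑ j, F (Z b j) := by
  rw [← Fintype.sum_prod_type' (fun b j => F (Z b j)), ← Equiv.sum_comp finProdFinEquiv]
  simp [flat]

theorem pointwise_key (μ : Measure E) (m n : ℕ) (hm : 1 ≤ m) (hn : 1 ≤ n)
    (X Y : Fin m → Fin n → E) (L : ℝ) (hL : L = Real.sqrt (8 * (m * Real.log (2 * m * n)))) :
    ENNReal.ofReal (3 / 4) * (m : ℝ≥0∞)⁻¹ * 2 ^ m *
      ∑ b, ENNReal.ofReal ((n : ℝ)⁻¹ * mcost (X b) (Y b)) ≤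
    ∑ s : Fin m → Bool, ENNReal.ofReal L *
      (dualW μ (m * n) (flat fun b => if s b then X b else Y b) +
        dualW μ (m * n) (flat fun b => if s b then Y b else X b)) := by
  have hm' : (1:ℝ) ≤ m := by exact_mod_cast hm
  have hn' : (1:ℝ) ≤ n := by exact_mod_cast hn
  have hN : (2:ℝ) ≤ 2 * m * n := by nlinarith
  have hlog : 0 < Real.log (2 * m * n) := Real.log_pos (by linarith)
  have hLpos : 0 < L := by rw [hL]; positivity
  obtain ⟨T, hT, hs⟩ := sign_key m n hm hn X Y L hL
  have h1 : ∀ s, ENNReal.ofReal (((m * n : ℕ) : ℝ)⁻¹ * T s) ≤ ENNReal.ofReal L *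
      (dualW μ (m * n) (flat fun b => if s b then X b else Y b) +
        dualW μ (m * n) (flat fun b => if s b then Y b else X b)) := by
    intro s
    obtain ⟨F, hF, hTF⟩ := hT s
    refine le_trans (ENNReal.ofReal_le_ofReal ?_) (pair_le_dualW μ (m * n) _ _ L hLpos F hF)
    refine mul_le_mul_of_nonneg_left (hTF.trans (le_of_eq ?_)) (by positivity)
    rw [Finset.sum_sub_distrib, sum_flat, sum_flat, ← Finset.sum_sub_distrib]
    refine Finset.sum_congr rfl fun b _ => ?_
    rw [← Finset.sum_sub_distrib]
    refine Finset.sum_congr rfl fun j _ => ?_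
    cases s b <;> simp [sgn]
  refine le_trans ?_ (Finset.sum_le_sum fun s _ => h1 s)
  have h2 : ENNReal.ofReal (∑ s, ((m * n : ℕ) : ℝ)⁻¹ * T s) ≤
      ∑ s, ENNReal.ofReal (((m * n : ℕ) : ℝ)⁻¹ * T s) := by
    exact Finset.le_sum_of_subadditive ENNReal.ofReal ENNReal.ofReal_zero.le
      (fun _ _ => ENNReal.ofReal_add_le) _ _
  refine le_trans ?_ h2
  have h3 : ENNReal.ofReal (3 / 4) * (m : ℝ≥0∞)⁻¹ * 2 ^ m *
      ∑ b, ENNReal.ofReal ((n : ℝ)⁻¹ * mcost (X b) (Y b)) =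
      ENNReal.ofReal (3 / 4 * (m : ℝ)⁻¹ * 2 ^ m * ∑ b, (n : ℝ)⁻¹ * mcost (X b) (Y b)) := by
    rw [ENNReal.ofReal_mul (by positivity), ENNReal.ofReal_mul (by positivity),
      ENNReal.ofReal_mul (by positivity), ENNReal.ofReal_inv_of_pos (by positivity),
      ENNReal.ofReal_natCast, ENNReal.ofReal_pow (by norm_num),
      ENNReal.ofReal_sum_of_nonneg fun b _ => mul_nonneg (by positivity) (mcost_nonneg _ _)]
    norm_num
  rw [h3]
  refine ENNReal.ofReal_le_ofReal ?_
  rw [← Finset.mul_sum, ← Finset.mul_sum]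
  have h4 := mul_le_mul_of_nonneg_left hs (by positivity : (0:ℝ) ≤ ((m * n : ℕ) : ℝ)⁻¹)
  refine le_trans (le_of_eq ?_) h4
  push_cast
  rw [mul_inv]
  ring

end MeasurePart

theorem main_bound {E : Type*} [MetricSpace E] [TopologicalSpace.SeparableSpace E]
    [MeasurableSpace E] [BorelSpace E]
    (μ : Measure E) [IsProbabilityMeasure μ] (hμ : HasFiniteMoment 1 μ)
    (m n : ℕ) (hm : 1 ≤ m) (hn : 1 ≤ n) (L : ℝ)
    (hL : L = Real.sqrt (8 * (m * Real.log (2 * m * n)))) :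
    ENNReal.ofReal (3 / 4) * expWp 1 μ n ≤ ENNReal.ofReal L * (2 * expWp 1 μ (m * n)) := by
  have : IsProbabilityMeasure (sampleMeasure μ n) := by unfold sampleMeasure; infer_instance
  have hm0 : (m : ℝ≥0∞) ≠ 0 := by simp; omega
  let ν := sampleMeasure μ n
  let P : Measure (Fin m → (Fin n → E) × (Fin n → E)) := Measure.pi fun _ => ν.prod ν
  have hC : Measurable fun z : (Fin n → E) × (Fin n → E) =>
      ENNReal.ofReal ((n : ℝ)⁻¹ * mcost z.1 z.2) :=
    ENNReal.measurable_ofReal.comp (measurable_mcost.const_mul _)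
  let κ := ∫⁻ z, ENNReal.ofReal ((n : ℝ)⁻¹ * mcost z.1 z.2) ∂(ν.prod ν)
  have hκ : expWp 1 μ n ≤ κ := by
    simp only [κ]
    rw [lintegral_prod _ hC.aemeasurable]
    exact lintegral_mono fun X => Wp_le_mcost μ n hn X
  let δ := ∫⁻ Z, dualW μ (m * n) Z ∂(sampleMeasure μ (m * n))
  have hδ : δ ≤ expWp 1 μ (m * n) := lintegral_mono fun Z => dualW_le μ hμ _ Z
  have hD := measurable_dualW μ (m * n)
  have hpres : ∀ s : Fin m → Bool, MeasurePreserving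
      (fun (ω : Fin m → (Fin n → E) × (Fin n → E)) =>
        (flat fun b => if s b then (ω b).1 else (ω b).2 : Fin (m * n) → E)) P
      (sampleMeasure μ (m * n)) := by
    intro s
    refine (flat_preserving μ m n).comp ?_
    refine measurePreserving_pi (fun _ => ν.prod ν) (fun _ => ν)
      (f := fun b z => if s b then z.1 else z.2) fun b => ?_
    cases s b
    · simpa using measurePreserving_snd
    · simpa using measurePreserving_fst
  have hpres' : ∀ s : Fin m → Bool, MeasurePreserving
      (fun (ω : Fin m → (Fin n → E) × (Fin n → E)) =>
        (flat fun b => if s b then (ω b).2 else (ω b).1 : Fin (m * n) → E)) P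
      (sampleMeasure μ (m * n)) := by
    intro s
    refine (flat_preserving μ m n).comp ?_
    refine measurePreserving_pi (fun _ => ν.prod ν) (fun _ => ν)
      (f := fun b z => if s b then z.2 else z.1) fun b => ?_
    cases s b
    · simpa using measurePreserving_fst
    · simpa using measurePreserving_snd
  have hint := lintegral_mono (μ := P) fun ω : Fin m → (Fin n → E) × (Fin n → E) =>
    pointwise_key μ m n hm hn (fun b => (ω b).1) (fun b => (ω b).2) L hL
  have hl : ∫⁻ ω, ENNReal.ofReal (3 / 4) * (m : ℝ≥0∞)⁻¹ * 2 ^ m *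
      ∑ b, ENNReal.ofReal ((n : ℝ)⁻¹ * mcost (ω b).1 (ω b).2) ∂P =
      2 ^ m * (ENNReal.ofReal (3 / 4) * κ) := by
    have hb : ∀ b : Fin m, Measurable fun ω : Fin m → (Fin n → E) × (Fin n → E) =>
        ENNReal.ofReal ((n : ℝ)⁻¹ * mcost (ω b).1 (ω b).2) := fun b =>
      hC.comp (measurable_pi_apply b)
    rw [lintegral_const_mul _ (Finset.measurable_fun_sum _ fun b _ => hb b),
      lintegral_finsetSum _ fun b _ => hb b]
    have : ∀ b : Fin m, ∫⁻ ω, ENNReal.ofReal ((n : ℝ)⁻¹ * mcost (ω b).1 (ω b).2) ∂P = κ :=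
      fun b => (measurePreserving_eval (fun _ : Fin m => ν.prod ν) b).lintegral_comp hC
    simp only [this]
    rw [Finset.sum_const, Finset.card_univ, Fintype.card_fin, nsmul_eq_mul]
    calc _ = ((m : ℝ≥0∞)⁻¹ * m) * (2 ^ m * (ENNReal.ofReal (3 / 4) * κ)) := by ring
      _ = _ := by rw [ENNReal.inv_mul_cancel hm0 (by simp), one_mul]
  have hr : ∫⁻ ω, ∑ s : Fin m → Bool, ENNReal.ofReal L *
      (dualW μ (m * n) (flat fun b => if s b then (ω b).1 else (ω b).2) +
        dualW μ (m * n) (flat fun b => if s b then (ω b).2 else (ω b).1)) ∂P =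
      2 ^ m * (ENNReal.ofReal L * (2 * δ)) := by
    have m1 : ∀ s : Fin m → Bool, Measurable fun ω : Fin m → (Fin n → E) × (Fin n → E) =>
        dualW μ (m * n) (flat fun b => if s b then (ω b).1 else (ω b).2) := fun s => hD.comp (hpres s).measurable
    have m2 : ∀ s : Fin m → Bool, Measurable fun ω : Fin m → (Fin n → E) × (Fin n → E) =>
        dualW μ (m * n) (flat fun b => if s b then (ω b).2 else (ω b).1) := fun s => hD.comp (hpres' s).measurable
    rw [lintegral_finsetSum]
    · have : ∀ s : Fin m → Bool, ∫⁻ ω, ENNReal.ofReal L *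
          (dualW μ (m * n) (flat fun b => if s b then (ω b).1 else (ω b).2) +
          dualW μ (m * n) (flat fun b => if s b then (ω b).2 else (ω b).1)) ∂P =
          ENNReal.ofReal L * (2 * δ) := by
        intro s
        have e1 := (hpres s).lintegral_comp hD
        have e2 := (hpres' s).lintegral_comp hD
        rw [lintegral_const_mul _ ((m1 s).fun_add (m2 s)), lintegral_add_left (m1 s), e1, e2, two_mul]
      simp [this]
    · intro s _
      exact ((m1 s).add (m2 s)).const_mul _
  have hfin : 2 ^ m * (ENNReal.ofReal (3 / 4) * κ) ≤ 2 ^ m * (ENNReal.ofReal L * (2 * δ)) := by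
    rw [← hl, ← hr]; exact hint
  rw [ENNReal.mul_le_mul_iff_right (by simp) (by simp)] at hfin
  calc _ ≤ ENNReal.ofReal (3 / 4) * κ := by gcongr
    _ ≤ _ := hfin
    _ ≤ _ := by gcongr

/-- **Lemma (w1lb).** Let `E` be a separable metric space and `μ ∈ 𝒫₁(E)`. Then for
all `m, n ∈ ℕ`,
`𝔼[W₁(μ_{mn}, μ)] ≥ (1/(11 √(m ln(2mn)))) 𝔼[W₁(μ_n, μ)]`. -/
theorem stmt_18 {E : Type*} [MetricSpace E] [TopologicalSpace.SeparableSpace E]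
    [MeasurableSpace E] [BorelSpace E]
    (μ : Measure E) [IsProbabilityMeasure μ] (hμ : HasFiniteMoment 1 μ)
    (m n : ℕ) (hm : 1 ≤ m) (hn : 1 ≤ n) :
    ENNReal.ofReal (1 / (11 * Real.sqrt (m * Real.log (2 * m * n)))) * expWp 1 μ n ≤
      expWp 1 μ (m * n) := by
  have hm' : (1:ℝ) ≤ m := by exact_mod_cast hm
  have hn' : (1:ℝ) ≤ n := by exact_mod_cast hn
  have hN : (2:ℝ) ≤ 2 * m * n := by nlinarith
  have hlog : 0 < Real.log (2 * m * n) := Real.log_pos (by linarith)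
  set R := Real.sqrt (m * Real.log (2 * m * n)) with hR
  have hRpos : 0 < R := by rw [hR]; positivity
  have hb := main_bound μ hμ m n hm hn _ rfl
  have hL : Real.sqrt (8 * (m * Real.log (2 * m * n))) ≤ 3 * R := by
    rw [Real.sqrt_le_left (by positivity), mul_pow, hR, Real.sq_sqrt (by positivity)]
    have : 0 < m * Real.log (2 * m * n) := by positivity
    linarith
  have h1 : ENNReal.ofReal (1 / (11 * R)) =
      ENNReal.ofReal (1 / (11 * R) * (4 / 3)) * ENNReal.ofReal (3 / 4) := by
    rw [← ENNReal.ofReal_mul (by positivity)]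
    congr 1
    ring
  calc ENNReal.ofReal (1 / (11 * R)) * expWp 1 μ n
      = ENNReal.ofReal (1 / (11 * R) * (4 / 3)) * (ENNReal.ofReal (3 / 4) * expWp 1 μ n) := by
        rw [h1, mul_assoc]
    _ ≤ ENNReal.ofReal (1 / (11 * R) * (4 / 3)) *
        (ENNReal.ofReal (3 * R) * (2 * expWp 1 μ (m * n))) := by
        exact mul_le_mul_right (hb.trans (mul_le_mul_left (ENNReal.ofReal_le_ofReal hL) _)) _
    _ = ENNReal.ofReal (1 / (11 * R) * (4 / 3) * (3 * R) * 2) * expWp 1 μ (m * n) := by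
        rw [ENNReal.ofReal_mul (q := 2) (by positivity),
          ENNReal.ofReal_mul (q := 3 * R) (by positivity), ENNReal.ofReal_ofNat]
        ring
    _ ≤ 1 * expWp 1 μ (m * n) := by
        gcongr
        rw [ENNReal.ofReal_le_one]
        have : 1 / (11 * R) * (4 / 3) * (3 * R) * 2 = 8 / 11 := by field_simp; norm_num
        rw [this]; norm_num
    _ = _ := one_mul _
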